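/- Suppose (M,𝒯) is edge-transitive and there exists a zero-curvature generalized decorated metric l ∈ ℝ^E (K̃(l) = 0). Then the constant metric l̂ whose value at every edge is the average (1/|E|)·Σ_{e∈E} l_e is a zero-curvature decorated metric: l̂ ∈ 𝓛(M,𝒯) and K(l̂) = 0. -/

import Mathlib

noncomputable section

open Real Set Filter

/-- The generalized Euclidean triangle angle `aᵢ(x)` opposite the side of length `x i`,
for a generalized triangle with (positive) side lengths `x 0, x 1, x 2`:
it is `π` if `x i ≥ x j + x k`, `0` if some other side is at least the sum of the
remaining two, and otherwise the usual Euclidean angle `arccos((xⱼ²+x_k²−xᵢ²)/(2xⱼx_k))`. -/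
noncomputable def genAngle (x : Fin 3 → ℝ) (i : Fin 3) : ℝ :=
  if x (i + 1) + x (i + 2) ≤ x i then Real.pi
  else if x i + x (i + 2) ≤ x (i + 1) ∨ x i + x (i + 1) ≤ x (i + 2) then 0
  else Real.arccos
    ((x (i + 1) ^ 2 + x (i + 2) ^ 2 - x i ^ 2) / (2 * x (i + 1) * x (i + 2)))

/-- The three side lengths `e^{(l₁₂+l₃₄)/2}, e^{(l₁₃+l₂₄)/2}, e^{(l₁₄+l₂₃)/2}` of the
generalized Euclidean triangle associated to a length vector `l ∈ ℝ⁶`.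
Edge indices: `0 ↔ {1,2}, 1 ↔ {1,3}, 2 ↔ {1,4}, 3 ↔ {2,3}, 4 ↔ {2,4}, 5 ↔ {3,4}`,
so opposite pairs of edges are `(0,5), (1,4), (2,3)`. -/
noncomputable def triSides (l : Fin 6 → ℝ) (k : Fin 3) : ℝ :=
  if k.val = 0 then Real.exp ((l 0 + l 5) / 2)
  else if k.val = 1 then Real.exp ((l 1 + l 4) / 2)
  else Real.exp ((l 2 + l 3) / 2)

/-- The quad (pair of opposite edges) containing the edge `p`. -/
def quadIndex (p : Fin 6) : Fin 3 :=
  if p.val = 0 ∨ p.val = 5 then 0 else if p.val = 1 ∨ p.val = 4 then 1 else 2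

/-- The extended dihedral angle `α_p(l)` of the generalized decorated tetrahedron with
length vector `l ∈ ℝ⁶` at the edge `p`. -/
noncomputable def dihedral (l : Fin 6 → ℝ) (p : Fin 6) : ℝ :=
  genAngle (triSides l) (quadIndex p)

/-- The edge index in `Fin 6` of the edge `{i,j}` of the tetrahedron on vertices `Fin 4`
(junk value for `i = j`). -/
def edgeOf (i j : Fin 4) : Fin 6 :=
  if (i.val = 0 ∧ j.val = 1) ∨ (i.val = 1 ∧ j.val = 0) then 0
  else if (i.val = 0 ∧ j.val = 2) ∨ (i.val = 2 ∧ j.val = 0) then 1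
  else if (i.val = 0 ∧ j.val = 3) ∨ (i.val = 3 ∧ j.val = 0) then 2
  else if (i.val = 1 ∧ j.val = 2) ∨ (i.val = 2 ∧ j.val = 1) then 3
  else if (i.val = 1 ∧ j.val = 3) ∨ (i.val = 3 ∧ j.val = 1) then 4
  else 5

/-- The two endpoints of the edge `p` of the tetrahedron. -/
def endPts (p : Fin 6) : Fin 4 × Fin 4 :=
  if p.val = 0 then (0, 1) else if p.val = 1 then (0, 2) else if p.val = 2 then (0, 3)
  else if p.val = 3 then (1, 2) else if p.val = 4 then (1, 3) else (2, 3)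

/-- The Lobachevsky function `Λ(x) = −∫₀ˣ ln|2 sin t| dt`. -/
noncomputable def lob (x : ℝ) : ℝ := -∫ t in (0:ℝ)..x, Real.log |2 * Real.sin t|

/-- The volume of the generalized decorated tetrahedron with length vector `l`. -/
noncomputable def vol6 (l : Fin 6 → ℝ) : ℝ := (1 / 2 : ℝ) * ∑ p : Fin 6, lob (dihedral l p)

/-- The co-volume function `cov(l) = 2 vol(l) + Σ α_p(l) l_p` on `ℝ⁶`. -/
noncomputable def cov6 (l : Fin 6 → ℝ) : ℝ := 2 * vol6 l + ∑ p : Fin 6, dihedral l p * l p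

/-- `𝓛 ⊂ ℝ⁶`: length vectors of genuine decorated ideal hyperbolic tetrahedra, i.e. those
whose associated generalized Euclidean triangle satisfies the strict triangle inequalities. -/
def Ldom : Set (Fin 6 → ℝ) :=
  {l | ∀ i : Fin 3, triSides l i < triSides l (i + 1) + triSides l (i + 2)}

/-- The action of `w ∈ ℝ⁴` on `l ∈ ℝ⁶`: `(w + l)_{ij} = l_{ij} + wᵢ + wⱼ`. -/
def act (w : Fin 4 → ℝ) (l : Fin 6 → ℝ) : Fin 6 → ℝ :=
  fun p => l p + w (endPts p).1 + w (endPts p).2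

/-- `ℝ̂⁴ = {w + 0 : w ∈ ℝ⁴} ⊂ ℝ⁶`. -/
def hatR4 : Set (Fin 6 → ℝ) := {x | ∃ w : Fin 4 → ℝ, x = act w 0}

/-- `i, j, k, h` are pairwise distinct, i.e. `{i,j,k,h} = {1,2,3,4}`. -/
def Distinct4 (i j k h : Fin 4) : Prop :=
  i ≠ j ∧ i ≠ k ∧ i ≠ h ∧ j ≠ k ∧ j ≠ h ∧ k ≠ h

variable {T E : Type*}

/-- The length vector in `ℝ⁶` induced on the tetrahedron `σ` by a metric `l : E → ℝ`. -/
def pullback (glue : T → Fin 6 → E) (l : E → ℝ) (σ : T) : Fin 6 → ℝ :=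
  fun p => l (glue σ p)

/-- The generalized Ricci curvature `K̃_e(l) = 2π − Σ_{σ} Σ_{p : glue σ p = e} α_p(l_σ)`. -/
noncomputable def Ric [Fintype T] [DecidableEq E] (glue : T → Fin 6 → E) (l : E → ℝ)
    (e : E) : ℝ :=
  2 * Real.pi -
    ∑ σ : T, ∑ p : Fin 6, if glue σ p = e then dihedral (pullback glue l σ) p else 0

/-- `𝓛(M,𝒯)`: the set of decorated hyperbolic polyhedral metrics. -/
def LMdom (glue : T → Fin 6 → E) : Set (E → ℝ) := {l | ∀ σ : T, pullback glue l σ ∈ Ldom}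

/-- `H̃(l) = Σ_σ cov(l_σ) − 2π Σ_e l_e`. -/
noncomputable def Htilde [Fintype T] [Fintype E] (glue : T → Fin 6 → E) (l : E → ℝ) : ℝ :=
  ∑ σ : T, cov6 (pullback glue l σ) - 2 * Real.pi * ∑ e : E, l e

/-- The valence `d_e` of an edge `e`: the number of pairs `(σ, p)` glued to `e`. -/
def valence [Fintype T] [DecidableEq E] (glue : T → Fin 6 → E) (e : E) : ℕ :=
  ∑ σ : T, ∑ p : Fin 6, if glue σ p = e then 1 else 0

/-- `(M,𝒯)` is edge-transitive: any edge can be mapped to any other edge by an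
automorphism of the triangulation. -/
def EdgeTransitive (glue : T → Fin 6 → E) : Prop :=
  ∀ e e' : E, ∃ (φ : T ≃ T) (ψ : E ≃ E) (ρ : T → Fin 4 ≃ Fin 4),
    (∀ (σ : T) (i j : Fin 4), i ≠ j →
      glue (φ σ) (edgeOf (ρ σ i) (ρ σ j)) = ψ (glue σ (edgeOf i j))) ∧ ψ e = e'

/-!
The angles of a generalized triangle sum to `π`, so the six dihedral angles of a tetrahedron sum
to `2π` whatever the metric, and the total curvature of every metric is `2π (|E| - |T|)`. One metric
of zero curvature therefore forces `|E| = |T|`, that is, an average valence of `6`. Under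
edge-transitivity all valences agree, so every edge has valence exactly `6`. All dihedral angles of
a constant metric are `π / 3`, and six of them around each edge make up `2π`.
-/

theorem angle_eq_arccos_norm_sub {V : Type*} [NormedAddCommGroup V] [InnerProductSpace ℝ V]
    (x y : V) :
    InnerProductGeometry.angle x y =
      Real.arccos ((‖x‖ ^ 2 + ‖y‖ ^ 2 - ‖x - y‖ ^ 2) / (2 * ‖x‖ * ‖y‖)) := by
  rw [InnerProductGeometry.angle,
    real_inner_eq_norm_mul_self_add_norm_mul_self_sub_norm_sub_mul_self_div_two, div_div]
  ring_nf

theorem exists_complex_norm_eq_norm_sub_eq {a b c : ℝ} (hb : 0 < b) (hc : 0 < c)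
    (ha : a ≤ b + c) (hbc : |b - c| ≤ a) : ∃ z w : ℂ, ‖z‖ = b ∧ ‖w‖ = c ∧ ‖z - w‖ = a := by
  have ha₀ : 0 ≤ a := (abs_nonneg _).trans hbc
  set C := (b ^ 2 + c ^ 2 - a ^ 2) / (2 * b * c) with hC
  have hC_le : C ≤ 1 := by
    rw [hC, div_le_one (by positivity)]
    linarith [sq_le_sq' (neg_le_of_abs_le hbc) (le_of_abs_le hbc)]
  have le_hC : -1 ≤ C := by
    rw [hC, le_div_iff₀ (by positivity)]
    linarith [pow_le_pow_left₀ ha₀ ha 2]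
  set w : ℂ := c * Complex.exp (Real.arccos C * Complex.I) with hw
  have hnorm_b : ‖(b : ℂ)‖ = b := by simp [hb.le]
  have hnorm_w : ‖w‖ = c := by simp [hw, Complex.norm_exp_ofReal_mul_I, hc.le]
  have hinner : inner ℝ (b : ℂ) w = b * c * C := by
    rw [Complex.inner, Complex.conj_ofReal, Complex.re_mul_ofReal, hw, Complex.re_ofReal_mul,
      Complex.exp_ofReal_mul_I_re, Real.cos_arccos le_hC hC_le]
    ring
  refine ⟨b, w, hnorm_b, hnorm_w, (sq_eq_sq₀ (norm_nonneg _) ha₀).mp ?_⟩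
  rw [norm_sub_sq_real, hnorm_b, hnorm_w, hinner, hC]
  field_simp
  ring

theorem arccos_add_arccos_add_arccos_eq_pi {a b c : ℝ}
    (ha : a < b + c) (hb : b < c + a) (hc : c < a + b) :
    Real.arccos ((b ^ 2 + c ^ 2 - a ^ 2) / (2 * b * c)) +
      Real.arccos ((c ^ 2 + a ^ 2 - b ^ 2) / (2 * c * a)) +
      Real.arccos ((a ^ 2 + b ^ 2 - c ^ 2) / (2 * a * b)) = π := by
  have hc₀ : 0 < c := by linarith
  obtain ⟨z, w, rfl, rfl, rfl⟩ :=
    exists_complex_norm_eq_norm_sub_eq (show 0 < b by linarith) hc₀ ha.le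
      (abs_le.mpr ⟨by linarith, by linarith⟩)
  have hsum :=
    InnerProductGeometry.angle_add_angle_sub_add_angle_sub_eq_pi z (norm_pos_iff.mp hc₀)
  simp only [angle_eq_arccos_norm_sub, sub_sub_cancel, norm_sub_rev w z] at hsum
  rw [← hsum]
  ring_nf

theorem genAngle_of_le {x : Fin 3 → ℝ} {i : Fin 3} (h : x (i + 1) + x (i + 2) ≤ x i) :
    genAngle x i = π :=
  if_pos h

theorem fin_three_add_add (i : Fin 3) :
    i + 1 + 1 = i + 2 ∧ i + 1 + 2 = i ∧ i + 2 + 1 = i ∧ i + 2 + 2 = i + 1 := by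
  revert i
  decide

theorem fin_three_eq_add_of_ne {i j : Fin 3} (hij : j ≠ i) : j = i + 1 ∨ j = i + 2 := by
  revert i j
  decide

theorem genAngle_eq_zero_of_le {x : Fin 3 → ℝ} (hx : ∀ i, 0 < x i) {i j : Fin 3} (hij : j ≠ i)
    (h : x (i + 1) + x (i + 2) ≤ x i) : genAngle x j = 0 := by
  obtain ⟨h₁₁, h₁₂, h₂₁, h₂₂⟩ := fin_three_add_add i
  have hx₁ := hx (i + 1)
  have hx₂ := hx (i + 2)
  rcases fin_three_eq_add_of_ne hij with rfl | rfl
  · rw [genAngle, h₁₁, h₁₂, if_neg (by linarith), if_pos (Or.inr h)]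
  · rw [genAngle, h₂₁, h₂₂, if_neg (by linarith), if_pos (Or.inl (by linarith))]

theorem genAngle_of_forall_lt {x : Fin 3 → ℝ} (h : ∀ i, x i < x (i + 1) + x (i + 2)) (i : Fin 3) :
    genAngle x i = Real.arccos
      ((x (i + 1) ^ 2 + x (i + 2) ^ 2 - x i ^ 2) / (2 * x (i + 1) * x (i + 2))) := by
  obtain ⟨h₁₁, h₁₂, h₂₁, h₂₂⟩ := fin_three_add_add i
  have h₁ := h (i + 1)
  have h₂ := h (i + 2)
  rw [h₁₁, h₁₂] at h₁
  rw [h₂₁, h₂₂] at h₂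
  rw [genAngle, if_neg (h i).not_ge, if_neg]
  rintro (hle | hle) <;> linarith

theorem sum_genAngle {x : Fin 3 → ℝ} (hx : ∀ i, 0 < x i) : ∑ i, genAngle x i = π := by
  by_cases hdeg : ∃ i, x (i + 1) + x (i + 2) ≤ x i
  · obtain ⟨i, hi⟩ := hdeg
    rw [Fintype.sum_eq_single i fun j hij => genAngle_eq_zero_of_le hx hij hi, genAngle_of_le hi]
  · push Not at hdeg
    simp only [Fin.sum_univ_three, genAngle_of_forall_lt hdeg]
    exact arccos_add_arccos_add_arccos_eq_pi (hdeg 0) (hdeg 1) (hdeg 2)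

theorem genAngle_const {a : ℝ} (ha : 0 < a) (i : Fin 3) : genAngle (fun _ => a) i = π / 3 := by
  have hsum : ∑ _j : Fin 3, genAngle (fun _ => a) i = π := sum_genAngle fun _ => ha
  rw [Fin.sum_const, nsmul_eq_mul] at hsum
  push_cast at hsum
  linarith

theorem triSides_pos (l : Fin 6 → ℝ) (k : Fin 3) : 0 < triSides l k := by
  unfold triSides
  split_ifs <;> positivity

theorem triSides_const (c : ℝ) : triSides (fun _ => c) = fun _ => Real.exp c := by
  funext k
  simp [triSides]

theorem sum_dihedral (l : Fin 6 → ℝ) : ∑ p, dihedral l p = 2 * π := by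
  rw [← sum_genAngle (triSides_pos l), Fin.sum_univ_six, Fin.sum_univ_three]
  change genAngle _ 0 + genAngle _ 1 + genAngle _ 2 + genAngle _ 2 + genAngle _ 1 + genAngle _ 0 = _
  ring

theorem dihedral_const (c : ℝ) (p : Fin 6) : dihedral (fun _ => c) p = π / 3 := by
  rw [dihedral, triSides_const, genAngle_const (Real.exp_pos c)]

theorem const_mem_Ldom (c : ℝ) : (fun _ => c) ∈ Ldom := by
  intro i
  simp only [triSides_const]
  linarith [Real.exp_pos c]

theorem const_mem_LMdom (glue : T → Fin 6 → E) (c : ℝ) : (fun _ => c) ∈ LMdom glue :=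
  fun _ => const_mem_Ldom c

theorem edgeOf_comm (i j : Fin 4) : edgeOf i j = edgeOf j i := by
  revert i j
  decide

theorem edgeOf_endPts (p : Fin 6) : edgeOf (endPts p).1 (endPts p).2 = p := by
  revert p
  decide

theorem endPts_fst_ne_snd (p : Fin 6) : (endPts p).1 ≠ (endPts p).2 := by
  revert p
  decide

theorem endPts_edgeOf {i j : Fin 4} (hij : i ≠ j) :
    endPts (edgeOf i j) = (i, j) ∨ endPts (edgeOf i j) = (j, i) := by
  revert i j
  decide

/-- The map on the edges of a tetrahedron induced by a map `f` of its vertices, `{i, j}` being sent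
to `{f i, f j}`. When `f` identifies `i` and `j`, this is the junk value of `edgeOf`. -/
def edgeMap (f : Fin 4 → Fin 4) (p : Fin 6) : Fin 6 :=
  edgeOf (f (endPts p).1) (f (endPts p).2)

theorem edgeMap_edgeOf (f : Fin 4 → Fin 4) {i j : Fin 4} (hij : i ≠ j) :
    edgeMap f (edgeOf i j) = edgeOf (f i) (f j) := by
  rcases endPts_edgeOf hij with h | h <;> simp only [edgeMap, h]
  exact edgeOf_comm _ _

theorem edgeMap_leftInverse {f g : Fin 4 → Fin 4} (h : Function.LeftInverse g f) :
    Function.LeftInverse (edgeMap g) (edgeMap f) := by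
  intro p
  change edgeMap g (edgeOf _ _) = p
  rw [edgeMap_edgeOf g (h.injective.ne (endPts_fst_ne_snd p)), h, h, edgeOf_endPts]

/-- The permutation of the edges of a tetrahedron induced by a permutation of its vertices. -/
def edgePerm (r : Equiv.Perm (Fin 4)) : Equiv.Perm (Fin 6) where
  toFun := edgeMap r
  invFun := edgeMap r.symm
  left_inv := edgeMap_leftInverse r.left_inv
  right_inv := edgeMap_leftInverse r.right_inv

theorem valence_apply_of_glue_comm {T' E' : Type*} [Fintype T] [Fintype T'] [DecidableEq E]
    [DecidableEq E'] {glue : T → Fin 6 → E} {glue' : T' → Fin 6 → E'} (φ : T ≃ T')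
    (τ : T → Equiv.Perm (Fin 6)) {ψ : E → E'} (hψ : Function.Injective ψ)
    (h : ∀ σ p, glue' (φ σ) (τ σ p) = ψ (glue σ p)) (e : E) :
    valence glue' (ψ e) = valence glue e := by
  unfold valence
  rw [← Equiv.sum_comp φ]
  refine Finset.sum_congr rfl fun σ _ => ?_
  rw [← Equiv.sum_comp (τ σ)]
  simp only [h, hψ.eq_iff]

theorem EdgeTransitive.valence_eq [Fintype T] [DecidableEq E] {glue : T → Fin 6 → E}
    (htr : EdgeTransitive glue) (e e' : E) : valence glue e = valence glue e' := by
  obtain ⟨φ, ψ, ρ, h, rfl⟩ := htr e e'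
  refine (valence_apply_of_glue_comm φ (fun σ => edgePerm (ρ σ)) ψ.injective (fun σ p => ?_) e).symm
  exact (h σ _ _ (endPts_fst_ne_snd p)).trans (by rw [edgeOf_endPts])

theorem sum_sum_sum_ite_glue_eq {ι R : Type*} [Fintype T] [Fintype E] [Fintype ι] [DecidableEq E]
    [AddCommMonoid R] (glue : T → ι → E) (f : T → ι → R) :
    ∑ e, ∑ σ, ∑ p, (if glue σ p = e then f σ p else 0) = ∑ σ, ∑ p, f σ p := by
  rw [Finset.sum_comm]
  refine Finset.sum_congr rfl fun σ _ => ?_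
  rw [Finset.sum_comm]
  simp only [Finset.sum_ite_eq, Finset.mem_univ, if_true]

theorem sum_valence [Fintype T] [Fintype E] [DecidableEq E] (glue : T → Fin 6 → E) :
    ∑ e, valence glue e = Fintype.card T * 6 := by
  simp only [valence, sum_sum_sum_ite_glue_eq glue fun _ _ => 1, Finset.sum_const,
    Finset.card_univ, Fintype.card_fin, smul_eq_mul, mul_one]

theorem valence_eq_six [Fintype T] [Fintype E] [DecidableEq E] {glue : T → Fin 6 → E}
    (hval : ∀ e e', valence glue e = valence glue e') (hcard : Fintype.card E = Fintype.card T)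
    (e : E) : valence glue e = 6 := by
  have hsum := sum_valence glue
  rw [Finset.sum_congr rfl fun e' _ => hval e' e, Finset.sum_const, Finset.card_univ, smul_eq_mul,
    ← hcard] at hsum
  exact Nat.eq_of_mul_eq_mul_left (Fintype.card_pos_iff.mpr ⟨e⟩) hsum

theorem sum_Ric [Fintype T] [Fintype E] [DecidableEq E] (glue : T → Fin 6 → E) (l : E → ℝ) :
    ∑ e, Ric glue l e = 2 * π * (Fintype.card E - Fintype.card T) := by
  simp only [Ric, Finset.sum_sub_distrib, sum_sum_sum_ite_glue_eq, sum_dihedral, Finset.sum_const,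
    Finset.card_univ, nsmul_eq_mul]
  ring

theorem card_eq_card_of_sum_Ric_eq_zero [Fintype T] [Fintype E] [DecidableEq E]
    {glue : T → Fin 6 → E} {l : E → ℝ} (hl : ∑ e, Ric glue l e = 0) :
    Fintype.card E = Fintype.card T := by
  rw [sum_Ric, mul_eq_zero, or_iff_right Real.two_pi_pos.ne', sub_eq_zero] at hl
  exact_mod_cast hl

theorem Ric_const [Fintype T] [DecidableEq E] (glue : T → Fin 6 → E) (c : ℝ) (e : E) :
    Ric glue (fun _ => c) e = 2 * π - valence glue e * (π / 3) := by
  have hpull (σ : T) : pullback glue (fun _ => c) σ = fun _ => c := rfl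
  simp only [Ric, valence, hpull, dihedral_const, Nat.cast_sum, Nat.cast_ite, Nat.cast_one,
    Nat.cast_zero, Finset.sum_mul, ite_mul, one_mul, zero_mul]

theorem edge_transitive_average_zero_curvature_general
    [Fintype T] [Fintype E] [DecidableEq E] {glue : T → Fin 6 → E}
    (hval : ∀ e e', valence glue e = valence glue e')
    {l : E → ℝ} (hl : ∑ e, Ric glue l e = 0) (c : ℝ) :
    (fun _ => c) ∈ LMdom glue ∧ ∀ e, Ric glue (fun _ => c) e = 0 := by
  refine ⟨const_mem_LMdom glue c, fun e => ?_⟩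
  have hsix : valence glue e = 6 := valence_eq_six hval (card_eq_card_of_sum_Ric_eq_zero hl) e
  rw [Ric_const, hsix]
  push_cast
  ring

/-- if `(M,𝒯)` is edge-transitive and carries a zero-curvature generalized
decorated metric `l`, then the constant metric with value the average of `l` is a
zero-curvature decorated metric. -/
theorem edge_transitive_average_zero_curvature
    [Fintype T] [Fintype E] [DecidableEq E] [Nonempty T]
    (glue : T → Fin 6 → E) (htr : EdgeTransitive glue)
    (l : E → ℝ) (hl : ∀ e : E, Ric glue l e = 0) :
    (fun _ : E => (∑ e : E, l e) / (Fintype.card E : ℝ)) ∈ LMdom glue ∧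
    ∀ e : E, Ric glue (fun _ : E => (∑ e' : E, l e') / (Fintype.card E : ℝ)) e = 0 := by
  exact edge_transitive_average_zero_curvature_general htr.valence_eq
    (Finset.sum_eq_zero fun e _ => hl e) _
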